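/- arXiv:math/0201083 — 4 statements merged into one kernel-verified Lean document; each statement's English description precedes it below -/
import Mathlib

section
/- Every standard term order on the free monoid X_n* on the finite alphabet {x_1,…,x_n} can be extended to a standard term order on the free monoid X* on the full countable alphabet; consequently, the partial order 𝔑_n (the intersection of all standard term orders on X_n*) is exactly the restriction to X_n* of the partial order 𝔑 (the intersection of all standard term orders on X*). -/
/-- A standard term order on the free monoid `X*` on the countable alphabet
`X = {x₁, x₂, …}`, whose words we represent as lists of positive integers
(the word `x_{i₁} ⋯ x_{i_d}` is the list `[i₁, …, i_d]`).  It is a strict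
total order such that the empty word `1` is smallest, which is compatible
with two-sided multiplication (concatenation), and with `x₁ < x₂ < ⋯`. -/
structure StdTermOrder where
  lt : List ℕ+ → List ℕ+ → Prop
  irrefl : ∀ a, ¬ lt a a
  trans : ∀ a b c, lt a b → lt b c → lt a c
  total : ∀ a b, a ≠ b → lt a b ∨ lt b a
  one_lt : ∀ t, t ≠ [] → lt [] t
  mul_lt : ∀ a b s t, lt s t → lt (a ++ s ++ b) (a ++ t ++ b)
  std : ∀ i j : ℕ+, i < j → lt [i] [j]

/-- The partial order `𝔑`, the intersection of all standard term orders: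
`m ≤_𝔑 m'` iff `m ≤ m'` holds for every standard term order on `X*`. -/
def Nle (m m' : List ℕ+) : Prop := ∀ T : StdTermOrder, m = m' ∨ T.lt m m'

/-- The strict version of `𝔑`. -/
def Nlt (m m' : List ℕ+) : Prop := Nle m m' ∧ m ≠ m'

/-- `m'` covers `m` in the partial order `𝔑`. -/
def NCovers (m m' : List ℕ+) : Prop :=
  Nlt m m' ∧ ∀ k, Nlt m k → ¬ Nlt k m'

/-- The predicate "the word lies in the submonoid `X_n*`", i.e. all its
letters are among `x₁, …, x_n`. -/
def InXn (n : ℕ+) (l : List ℕ+) : Prop := ∀ a ∈ l, a ≤ n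

/-- A standard term order on the free monoid `X_n*` on the finite alphabet
`{x₁, …, x_n}`: a relation which, restricted to the words with letters of
index at most `n`, is a strict total order, smallest on the empty word,
compatible with multiplication, and with `x₁ < ⋯ < x_n`. -/
structure StdTermOrderN (n : ℕ+) where
  lt : List ℕ+ → List ℕ+ → Prop
  irrefl : ∀ a, InXn n a → ¬ lt a a
  trans : ∀ a b c, InXn n a → InXn n b → InXn n c → lt a b → lt b c → lt a c
  total : ∀ a b, InXn n a → InXn n b → a ≠ b → lt a b ∨ lt b a
  one_lt : ∀ t, InXn n t → t ≠ [] → lt [] t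
  mul_lt : ∀ a b s t, InXn n a → InXn n b → InXn n s → InXn n t →
    lt s t → lt (a ++ s ++ b) (a ++ t ++ b)
  std : ∀ i j : ℕ+, i < j → j ≤ n → lt [i] [j]

/-- `𝔑_n`, the intersection of all standard term orders on `X_n*`. -/
def NleN (n : ℕ+) (m m' : List ℕ+) : Prop :=
  ∀ T : StdTermOrderN n, m = m' ∨ T.lt m m'

namespace Ext

/-- Words in `X_n*`. -/
structure W (n : ℕ+) where
  word : List ℕ+
  mem : InXn n word

/-- The linear order on `X_n*` given by a standard term order. -/
@[reducible] noncomputable def linW {n : ℕ+} (T : StdTermOrderN n) : LinearOrder (W n) :=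
  letI : IsStrictTotalOrder (W n) (fun a b => T.lt a.1 b.1) :=
    { trichotomous := by
        intro a b h1 h2
        by_contra h
        rcases T.total a.1 b.1 a.2 b.2 (fun e => h (by cases a; cases b; simp_all)) with h' | h'
        · exact h1 h'
        · exact h2 h'
      irrefl := fun a => T.irrefl a.1 a.2
      trans := fun a b c => T.trans a.1 b.1 c.1 a.2 b.2 c.2 }
  letI : DecidableRel (fun a b : W n => T.lt a.1 b.1) := Classical.decRel _
  linearOrderOfSTO (fun a b => T.lt a.1 b.1)

/-- Apply `f` to the first entry. -/
def mapHead {α : Type} (f : α → α) : List α → List α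
  | [] => []
  | h :: t => f h :: t

/-- Apply `f` to the last entry. -/
def mapLast {α : Type} (f : α → α) : List α → List α
  | [] => []
  | [h] => [f h]
  | h :: h' :: t => h :: mapLast f (h' :: t)

theorem mapHead_lt {α : Type} [LinearOrder α] {f : α → α} (hf : StrictMono f)
    {A B : List α} (hl : A.length = B.length) (h : A < B) : mapHead f A < mapHead f B := by
  cases A with
  | nil => cases B <;> simp_all
  | cons a A =>
    cases B with
    | nil => simp_all
    | cons b B =>
      simp only [mapHead, List.cons_lt_cons_iff] at h ⊢
      rcases h with h | ⟨rfl, h⟩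
      · exact Or.inl (hf h)
      · exact Or.inr ⟨rfl, h⟩

theorem mapLast_lt {α : Type} [LinearOrder α] {f : α → α} (hf : StrictMono f) :
    ∀ {A B : List α} (_ : A.length = B.length) (_ : A < B), mapLast f A < mapLast f B
  | [], B, hl, h => by cases B <;> simp_all
  | a :: A, [], hl, h => by simp_all
  | [a], [b], hl, h => by
      simp only [mapLast, List.cons_lt_cons_iff] at h ⊢
      rcases h with h | ⟨rfl, h⟩
      · exact Or.inl (hf h)
      · exact absurd h (lt_irrefl _)
  | [a], b :: b' :: B, hl, h => by simp at hl
  | a :: a' :: A, [b], hl, h => by simp at hl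
  | a :: a' :: A, b :: b' :: B, hl, h => by
      have ih := @mapLast_lt α _ f hf (a' :: A) (b' :: B) (by simpa using hl)
      simp only [mapLast]
      rw [List.cons_lt_cons_iff] at h ⊢
      rcases h with h | ⟨rfl, h⟩
      · exact Or.inl h
      · exact Or.inr ⟨rfl, ih h⟩

theorem append_lt {α : Type} [LinearOrder α] (C : List α) :
    ∀ {A B : List α} (_ : A.length = B.length) (_ : A < B), A ++ C < B ++ C
  | [], B, hl, h => by cases B <;> simp_all
  | a :: A, [], hl, h => by simp_all
  | a :: A, b :: B, hl, h => by
      have ih := @append_lt α _ C A B (by simpa using hl)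
      simp only [List.cons_append]
      rw [List.cons_lt_cons_iff] at h ⊢
      rcases h with h | ⟨rfl, h⟩
      · exact Or.inl h
      · exact Or.inr ⟨rfl, ih h⟩

variable {n : ℕ+}

def lmul (x : ℕ+) (hx : x ≤ n) (w : W n) : W n :=
  ⟨x :: w.1, fun a ha => by
    rcases List.mem_cons.1 ha with rfl | h
    · exact hx
    · exact w.2 a h⟩

def rmul (x : ℕ+) (hx : x ≤ n) (w : W n) : W n :=
  ⟨w.1 ++ [x], fun a ha => by
    rcases List.mem_append.1 ha with h | h
    · exact w.2 a h
    · rw [List.mem_singleton.1 h]; exact hx⟩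

def one : W n := ⟨[], fun a ha => by simp at ha⟩

/-- The list of maximal `X_n`-blocks between big letters. -/
def sp : List ℕ+ → List (W n)
  | [] => [one]
  | x :: w => if h : x ≤ n then mapHead (lmul x h) (sp w) else one :: sp w

/-- The word of big letters. -/
def big (n : ℕ+) : List ℕ+ → List ℕ+
  | [] => []
  | x :: w => if x ≤ n then big n w else x :: big n w

theorem big_append (a b : List ℕ+) : big n (a ++ b) = big n a ++ big n b := by
  induction a with
  | nil => rfl
  | cons x a ih => simp only [List.cons_append, big]; split <;> simp [ih]

theorem length_mapHead {α : Type} (f : α → α) (A : List α) :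
    (mapHead f A).length = A.length := by cases A <;> rfl

theorem sp_length (w : List ℕ+) : (sp w : List (W n)).length = (big n w).length + 1 := by
  induction w with
  | nil => rfl
  | cons x w ih => simp only [sp, big]; split <;> simp [ih, length_mapHead]

theorem sp_ne (w : List ℕ+) : ∃ h t, (sp w : List (W n)) = h :: t := by
  have := sp_length (n := n) w
  cases h : (sp w : List (W n)) with
  | nil => simp [h] at this
  | cons a t => exact ⟨a, t, rfl⟩

theorem sp_snoc_small (w : List ℕ+) (x : ℕ+) (hx : x ≤ n) :
    (sp (w ++ [x]) : List (W n)) = mapLast (rmul x hx) (sp w) := by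
  induction w with
  | nil => simp [sp, hx, mapHead, mapLast, lmul, rmul, one]
  | cons y w ih =>
    obtain ⟨h, t, e⟩ := sp_ne (n := n) w
    simp only [List.cons_append, sp, ih, e]
    split
    · cases t <;> simp [mapHead, mapLast, lmul, rmul]
    · rfl

theorem sp_snoc_big (w : List ℕ+) (x : ℕ+) (hx : ¬ x ≤ n) :
    (sp (w ++ [x]) : List (W n)) = sp w ++ [one] := by
  induction w with
  | nil => simp [sp, hx]
  | cons y w ih =>
    obtain ⟨h, t, e⟩ := sp_ne (n := n) w
    simp only [List.cons_append, sp, ih, e]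
    split <;> simp [mapHead]

def join : List ℕ+ → List (W n) → List ℕ+
  | _, [] => []
  | [], h :: _ => h.1
  | y :: ys, h :: t => h.1 ++ y :: join ys t

theorem join_sp (w : List ℕ+) : join (big n w) (sp w : List (W n)) = w := by
  induction w with
  | nil => rfl
  | cons x w ih =>
    obtain ⟨h, t, e⟩ := sp_ne (n := n) w
    rw [e] at ih
    simp only [sp, big, e]
    split
    · cases hb : big n w <;> simp_all [join, mapHead, lmul]
    · simp [join, ih, one]

theorem sp_small (w : List ℕ+) (hw : InXn n w) : (sp w : List (W n)) = [⟨w, hw⟩] := by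
  induction w with
  | nil => rfl
  | cons x w ih =>
    have hx : x ≤ n := hw x (by simp)
    have hw' : InXn n w := fun a ha => hw a (by simp [ha])
    simp [sp, hx, ih hw', mapHead, lmul]

theorem big_small (w : List ℕ+) (hw : InXn n w) : big n w = [] := by
  induction w with
  | nil => rfl
  | cons x w ih =>
    have hx : x ≤ n := hw x (by simp)
    have hw' : InXn n w := fun a ha => hw a (by simp [ha])
    simp [big, hx, ih hw']

theorem small_of_big (w : List ℕ+) (hw : big n w = []) : InXn n w := by
  induction w with
  | nil => intro a ha; simp at ha
  | cons x w ih =>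
    simp only [big] at hw
    split at hw
    · rename_i hx
      intro a ha
      rcases List.mem_cons.1 ha with rfl | h
      · exact hx
      · exact ih hw a h
    · simp at hw

/-- The extended order. -/
def elt (T : StdTermOrderN n) (s t : List ℕ+) : Prop :=
  letI := linW T
  (big n s).length < (big n t).length ∨ ((big n s).length = (big n t).length ∧
    (big n s < big n t ∨ (big n s = big n t ∧ (sp s : List (W n)) < sp t)))

theorem elt_small (T : StdTermOrderN n) {s t : List ℕ+} (hs : InXn n s) (ht : InXn n t) :
    elt T s t ↔ T.lt s t := by
  letI := linW T
  simp only [elt, big_small s hs, big_small t ht, sp_small s hs, sp_small t ht,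
    List.cons_lt_cons_iff]
  simp
  rfl

theorem elt_left (T : StdTermOrderN n) (x : ℕ+) {s t : List ℕ+} (h : elt T s t) :
    elt T (x :: s) (x :: t) := by
  letI := linW T
  by_cases hx : x ≤ n
  · simp only [elt, big, hx, if_true, sp, dif_pos] at h ⊢
    rcases h with h | ⟨h1, h | ⟨h2, h⟩⟩
    · exact Or.inl h
    · exact Or.inr ⟨h1, Or.inl h⟩
    · refine Or.inr ⟨h1, Or.inr ⟨h2, mapHead_lt ?_ (by simp [sp_length, h1]) h⟩⟩
      intro a b hab
      have := T.mul_lt [x] [] a.1 b.1 (by simpa [InXn] using hx) (by simp [InXn]) a.2 b.2 hab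
      simp only [List.append_nil] at this
      exact this
  · simp only [elt, big, hx, if_false, sp, dif_neg, not_false_eq_true] at h ⊢
    simpa [List.cons_lt_cons_iff] using h

theorem elt_right (T : StdTermOrderN n) (x : ℕ+) {s t : List ℕ+} (h : elt T s t) :
    elt T (s ++ [x]) (t ++ [x]) := by
  letI := linW T
  by_cases hx : x ≤ n
  · simp only [elt, big_append, sp_snoc_small _ x hx] at h ⊢
    simp only [big, hx, if_true, List.append_nil]
    rcases h with h | ⟨h1, h | ⟨h2, h⟩⟩
    · exact Or.inl h
    · exact Or.inr ⟨h1, Or.inl h⟩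
    · refine Or.inr ⟨h1, Or.inr ⟨h2, mapLast_lt ?_ (by simp [sp_length, h1]) h⟩⟩
      intro a b hab
      have := T.mul_lt [] [x] a.1 b.1 (by simp [InXn]) (by simpa [InXn] using hx) a.2 b.2 hab
      simp only [List.nil_append] at this
      exact this
  · simp only [elt, big_append, sp_snoc_big _ x hx] at h ⊢
    rcases h with h | ⟨h1, h | ⟨h2, h⟩⟩
    · exact Or.inl (by simpa using h)
    · exact Or.inr ⟨by simp [h1], Or.inl (append_lt _ h1 h)⟩
    · exact Or.inr ⟨by simp [h1], Or.inr ⟨by rw [h2], append_lt _ (by simp [sp_length, h1]) h⟩⟩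

/-- The extension as a standard term order on `X*`. -/
def ext (T : StdTermOrderN n) : StdTermOrder where
  lt := elt T
  irrefl := by
    intro a h
    letI := linW T
    simp [elt] at h
  trans := by
    letI := linW T
    rintro a b c (h | ⟨h1, h | ⟨h2, h⟩⟩) (k | ⟨k1, k | ⟨k2, k⟩⟩)
    · exact Or.inl (h.trans k)
    · exact Or.inl (by omega)
    · exact Or.inl (by omega)
    · exact Or.inl (by omega)
    · exact Or.inr ⟨by omega, Or.inl (h.trans k)⟩
    · exact Or.inr ⟨by omega, Or.inl (k2 ▸ h)⟩
    · exact Or.inl (by omega)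
    · exact Or.inr ⟨by omega, Or.inl (h2 ▸ k)⟩
    · exact Or.inr ⟨by omega, Or.inr ⟨h2.trans k2, lt_trans h k⟩⟩
  total := by
    letI := linW T
    intro a b hab
    rcases lt_trichotomy (big n a).length (big n b).length with h | h | h
    · exact Or.inl (Or.inl h)
    · rcases lt_trichotomy (big n a) (big n b) with k | k | k
      · exact Or.inl (Or.inr ⟨h, Or.inl k⟩)
      · rcases lt_trichotomy (sp a : List (W n)) (sp b) with l | l | l
        · exact Or.inl (Or.inr ⟨h, Or.inr ⟨k, l⟩⟩)
        · exact absurd (by rw [← join_sp (n := n) a, k, l, join_sp]) hab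
        · exact Or.inr (Or.inr ⟨h.symm, Or.inr ⟨k.symm, l⟩⟩)
      · exact Or.inr (Or.inr ⟨h.symm, Or.inl k⟩)
    · exact Or.inr (Or.inl h)
  one_lt := by
    intro t ht
    by_cases hb : big n t = []
    · have hs := small_of_big t hb
      exact (elt_small T (by simp [InXn]) hs).2 (T.one_lt t hs ht)
    · exact Or.inl (by simpa [big] using List.length_pos_iff.2 hb)
  mul_lt := by
    intro a b s t h
    have h1 : elt T (a ++ s) (a ++ t) := by
      induction a with
      | nil => exact h
      | cons x a ih => exact elt_left T x ih
    induction b using List.reverseRecOn with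
    | nil => simpa using h1
    | append_singleton b x ih =>
      have := elt_right T x ih
      simpa [List.append_assoc] using this
  std := by
    intro i j hij
    by_cases hj : j ≤ n
    · have hi : i ≤ n := hij.le.trans hj
      exact (elt_small T (by simpa [InXn] using hi) (by simpa [InXn] using hj)).2 (T.std i j hij hj)
    · by_cases hi : i ≤ n
      · exact Or.inl (by simp [big, hi, hj])
      · refine Or.inr ⟨by simp [big, hi, hj], Or.inl ?_⟩
        simp [big, hi, hj, List.cons_lt_cons_iff, hij]

/-- Restriction of a standard term order. -/
def res (n : ℕ+) (T : StdTermOrder) : StdTermOrderN n where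
  lt := T.lt
  irrefl := fun a _ => T.irrefl a
  trans := fun a b c _ _ _ => T.trans a b c
  total := fun a b _ _ => T.total a b
  one_lt := fun t _ => T.one_lt t
  mul_lt := fun a b s t _ _ _ _ => T.mul_lt a b s t
  std := fun i j h _ => T.std i j h

end Ext

/-- Every standard term order on `X_n*` extends to a standard term order on
`X*`; consequently `𝔑_n` is exactly the restriction of `𝔑` to `X_n*`. -/
theorem stmt0 (n : ℕ+) :
    (∀ Tn : StdTermOrderN n, ∃ T : StdTermOrder,
      ∀ m m', InXn n m → InXn n m' → (Tn.lt m m' ↔ T.lt m m')) ∧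
    (∀ m m', InXn n m → InXn n m' → (NleN n m m' ↔ Nle m m')) := by
  refine ⟨fun Tn => ⟨Ext.ext Tn, fun m m' hm hm' => (Ext.elt_small Tn hm hm').symm⟩, ?_⟩
  intro m m' hm hm'
  constructor
  · intro h T
    exact h (Ext.res n T)
  · intro h Tn
    exact (h (Ext.ext Tn)).imp id (Ext.elt_small Tn hm hm').1
end

section
/- For every word m ∈ X*, the principal order ideal {m' ∈ X* : m' ≤_𝔑 m} is a finite set. -/
/-- The weight of a word: the letter `x_i` has weight `i`. -/
def wtS (l : List ℕ+) : ℕ := (l.map PNat.val).sum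

theorem wtS_nil : wtS [] = 0 := rfl

theorem wtS_cons (x : ℕ+) (l : List ℕ+) : wtS (x :: l) = (x : ℕ) + wtS l := by
  simp [wtS]

theorem wtS_append (a b : List ℕ+) : wtS (a ++ b) = wtS a + wtS b := by
  simp [wtS]

theorem lex_append_right (b : List ℕ+) : ∀ s t : List ℕ+, wtS s = wtS t → s < t →
    s ++ b < t ++ b := by
  intro s
  induction s with
  | nil =>
    intro t h hl
    cases t with
    | nil => exact absurd hl (lt_irrefl _)
    | cons y t =>
      rw [wtS_nil, wtS_cons] at h
      have := y.pos
      omega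
  | cons x s ih =>
    intro t h hl
    cases t with
    | nil => exact absurd hl (by simp)
    | cons y t =>
      rw [List.cons_append, List.cons_append]
      rw [List.cons_lt_cons_iff] at hl ⊢
      rcases hl with hl | ⟨rfl, hl⟩
      · exact Or.inl hl
      · rw [wtS_cons, wtS_cons] at h
        exact Or.inr ⟨rfl, ih t (by omega) hl⟩

theorem lex_append_left (s t : List ℕ+) (h : s < t) : ∀ a : List ℕ+, a ++ s < a ++ t := by
  intro a
  induction a with
  | nil => simpa using h
  | cons x a ih =>
    rw [List.cons_append, List.cons_append, List.cons_lt_cons_iff]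
    exact Or.inr ⟨rfl, ih⟩

/-- The weighted-degree lexicographic order. -/
def wtOrder : StdTermOrder where
  lt a b := wtS a < wtS b ∨ (wtS a = wtS b ∧ a < b)
  irrefl a h := by
    rcases h with h | ⟨_, h⟩
    · exact lt_irrefl _ h
    · exact lt_irrefl _ h
  trans a b c h1 h2 := by
    rcases h1 with h1 | ⟨h1, h1'⟩ <;> rcases h2 with h2 | ⟨h2, h2'⟩
    · left; omega
    · left; omega
    · left; omega
    · right; exact ⟨by omega, lt_trans h1' h2'⟩
  total a b hab := by
    rcases lt_trichotomy (wtS a) (wtS b) with h | h | h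
    · exact Or.inl (Or.inl h)
    · rcases lt_or_gt_of_ne hab with h' | h'
      · exact Or.inl (Or.inr ⟨h, h'⟩)
      · exact Or.inr (Or.inr ⟨h.symm, h'⟩)
    · exact Or.inr (Or.inl h)
  one_lt t ht := by
    left
    cases t with
    | nil => exact absurd rfl ht
    | cons y t =>
      rw [wtS_nil, wtS_cons]
      have := y.pos
      omega
  mul_lt a b s t h := by
    simp only [wtS_append]
    rcases h with h | ⟨h, h'⟩
    · left; omega
    · right
      refine ⟨by omega, ?_⟩
      rw [List.append_assoc, List.append_assoc]
      exact lex_append_left _ _ (lex_append_right b s t h h') a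
  std i j h := by
    left
    rw [wtS_cons, wtS_cons]
    have : (i : ℕ) < j := h
    omega

theorem finite_wtS (n : ℕ) : {l : List ℕ+ | wtS l ≤ n}.Finite := by
  induction n with
  | zero =>
    refine (Set.finite_singleton []).subset ?_
    intro l hl
    cases l with
    | nil => rfl
    | cons y t =>
      have hl : wtS (y :: t) ≤ 0 := hl
      rw [wtS_cons] at hl
      have := y.pos
      omega
  | succ n ih =>
    refine ((Set.finite_singleton []).union
      (Set.Finite.image2 List.cons (Set.finite_Iic (Nat.succPNat n)) ih)).subset ?_
    intro l hl
    cases l with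
    | nil => exact Or.inl rfl
    | cons y t =>
      have hl : wtS (y :: t) ≤ n + 1 := hl
      rw [wtS_cons] at hl
      have := y.pos
      refine Or.inr ⟨y, ?_, t, ?_, rfl⟩
      · change (y : ℕ) ≤ n + 1
        omega
      · change wtS t ≤ n
        omega

/-- Every principal order ideal of `𝔑` is finite. -/
theorem stmt1 (m : List ℕ+) : {m' : List ℕ+ | Nle m' m}.Finite := by
  refine (finite_wtS (wtS m)).subset ?_
  intro m' h
  change wtS m' ≤ wtS m
  rcases h wtOrder with h | h | h
  · rw [h]
  · exact h.le
  · exact h.1.le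
end

section
/- The partial order 𝔑 is a well partial order on X*: for every infinite sequence m_1, m_2, m_3, … of words in X*, there exist indices i < j with m_i ≤_𝔑 m_j. -/
theorem Nle_of_sublistForall₂ {a b : List ℕ+}
    (h : List.SublistForall₂ (· ≤ ·) a b) : Nle a b := by
  intro T
  induction h with
  | @nil l =>
    by_cases hl : l = []
    · exact Or.inl hl.symm
    · exact Or.inr (T.one_lt l hl)
  | @cons x y l₁ l₂ hxy _ ih =>
    have h1 : x :: l₁ = x :: l₂ ∨ T.lt (x :: l₁) (x :: l₂) := by
      rcases ih with rfl | ih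
      · exact Or.inl rfl
      · exact Or.inr (by simpa using T.mul_lt [x] [] _ _ ih)
    have h2 : x :: l₂ = y :: l₂ ∨ T.lt (x :: l₂) (y :: l₂) := by
      rcases eq_or_lt_of_le hxy with rfl | hlt
      · exact Or.inl rfl
      · exact Or.inr (by simpa using T.mul_lt [] l₂ _ _ (T.std x y hlt))
    rcases h1 with h1 | h1
    · rw [h1]; exact h2
    · rcases h2 with h2 | h2
      · rw [← h2]; exact Or.inr h1
      · exact Or.inr (T.trans _ _ _ h1 h2)
  | @cons_right y l₁ l₂ _ ih =>
    have h2 : T.lt l₂ (y :: l₂) := by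
      simpa using T.mul_lt [] l₂ [] [y] (T.one_lt [y] (by simp))
    rcases ih with rfl | ih
    · exact Or.inr h2
    · exact Or.inr (T.trans _ _ _ ih h2)

/-- `𝔑` is a well partial order on `X*`: every infinite sequence of words
contains an increasing pair. -/
theorem stmt2 (f : ℕ → List ℕ+) : ∃ i j : ℕ, i < j ∧ Nle (f i) (f j) := by
  have hw : (Set.univ : Set ℕ+).PartiallyWellOrderedOn (· ≤ ·) :=
    Set.IsPWO.of_linearOrder _
  obtain ⟨i, j, hij, h⟩ :=
    (Set.PartiallyWellOrderedOn.partiallyWellOrderedOn_sublistForall₂ (· ≤ ·) hw).exists_lt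
      (f := f) (fun n x _ => Set.mem_univ x)
  exact ⟨i, j, hij, Nle_of_sublistForall₂ h⟩
end

section
/- For elements a, b of the free commutative monoid [X] on X = {x_1, x_2, …} (identified with finitely supported functions ℕ⁺ → ℕ), the relation a ≤_𝔠 b, meaning that a ≤ b holds for every standard term order on [X], holds if and only if b can be obtained from a by a finite sequence of elementary steps of the two forms: c ↦ c + e_i (multiply by a variable x_i), and c ↦ c − e_i + e_{i+1} when c_i > 0 (replace one occurrence of x_i by x_{i+1}), where e_i denotes the i-th standard unit vector. -/
/-- A standard term order on the free abelian monoid `[X]`, whose elements we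
represent as finitely supported functions `ℕ+ →₀ ℕ` (exponent vectors): a
strict total order with `1` (i.e. `0`) smallest, compatible with
multiplication (addition of exponent vectors), and with `x₁ < x₂ < ⋯`. -/
structure CStdTermOrder where
  lt : (ℕ+ →₀ ℕ) → (ℕ+ →₀ ℕ) → Prop
  irrefl : ∀ a, ¬ lt a a
  trans : ∀ a b c, lt a b → lt b c → lt a c
  total : ∀ a b, a ≠ b → lt a b ∨ lt b a
  one_lt : ∀ t, t ≠ 0 → lt 0 t
  mul_lt : ∀ t s s', lt s s' → lt (t + s) (t + s')
  std : ∀ i j : ℕ+, i < j → lt (Finsupp.single i 1) (Finsupp.single j 1)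

/-- The partial order `𝔠` on `[X]`, the intersection of all standard term
orders on `[X]`. -/
def Cle (a b : ℕ+ →₀ ℕ) : Prop := ∀ T : CStdTermOrder, a = b ∨ T.lt a b

/-- The elementary steps in `[X]`: multiply by a variable `xᵢ`, or replace one
occurrence of `xᵢ` by `x_{i+1}` (stated additively, without subtraction:
`c' = c - eᵢ + e_{i+1}` iff `c' + eᵢ = c + e_{i+1}`). -/
def CStep (c c' : ℕ+ →₀ ℕ) : Prop :=
  (∃ i : ℕ+, c' = c + Finsupp.single i 1) ∨
  (∃ i : ℕ+, 0 < c i ∧ c' + Finsupp.single i 1 = c + Finsupp.single (i + 1) 1)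

/-- The tail sum `∑_{i ≥ k} c_i`. -/
noncomputable def tailSum (k : ℕ+) : (ℕ+ →₀ ℕ) →+ ℕ :=
  Finsupp.liftAddHom fun i => if k ≤ i then AddMonoidHom.id ℕ else 0

theorem tailSum_single (k i : ℕ+) (n : ℕ) :
    tailSum k (Finsupp.single i n) = if k ≤ i then n else 0 := by
  unfold tailSum
  rw [Finsupp.liftAddHom_apply_single]
  split_ifs <;> simp

/-- Compare at the largest index where the exponents differ. -/
def colexLt (a b : ℕ+ →₀ ℕ) : Prop := ∃ j, a j < b j ∧ ∀ i, j < i → a i = b i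

theorem colexLt_total (a b : ℕ+ →₀ ℕ) (h : a ≠ b) : colexLt a b ∨ colexLt b a := by
  classical
  have hne : ((a.support ∪ b.support).filter fun i => a i ≠ b i).Nonempty := by
    obtain ⟨i, hi⟩ := DFunLike.ne_iff.mp h
    refine ⟨i, ?_⟩
    simp only [Finset.mem_filter, Finset.mem_union, Finsupp.mem_support_iff]
    exact ⟨by omega, hi⟩
  obtain ⟨j, hj, hmax⟩ := Finset.exists_max_image _ (fun i : ℕ+ => i) hne
  have hj' := (Finset.mem_filter.mp hj).2
  have heq : ∀ i, j < i → a i = b i := by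
    intro i hi
    by_contra hc
    have := hmax i (by
      simp only [Finset.mem_filter, Finset.mem_union, Finsupp.mem_support_iff]
      exact ⟨by omega, hc⟩)
    exact absurd hi (not_lt.mpr this)
  rcases lt_or_gt_of_ne hj' with h1 | h1
  · exact Or.inl ⟨j, h1, heq⟩
  · exact Or.inr ⟨j, h1, fun i hi => (heq i hi).symm⟩

theorem colexLt_trans (a b c : ℕ+ →₀ ℕ) (h : colexLt a b) (h' : colexLt b c) : colexLt a c := by
  obtain ⟨j, hj, hj'⟩ := h
  obtain ⟨k, hk, hk'⟩ := h'
  rcases lt_trichotomy j k with h | h | h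
  · exact ⟨k, by rw [hj' k h]; exact hk, fun i hi => (hj' i (h.trans hi)).trans (hk' i hi)⟩
  · subst h
    exact ⟨j, hj.trans hk, fun i hi => (hj' i hi).trans (hk' i hi)⟩
  · exact ⟨j, by rw [← hk' j h]; exact hj, fun i hi => (hj' i hi).trans (hk' i (h.trans hi))⟩

theorem colexLt_irrefl (a : ℕ+ →₀ ℕ) : ¬ colexLt a a := fun ⟨_, h, _⟩ => lt_irrefl _ h

/-- The standard term order comparing first the tail sum from `k`, then colexicographically. -/
noncomputable def tailOrder (k : ℕ+) : CStdTermOrder where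
  lt a b := tailSum k a < tailSum k b ∨ (tailSum k a = tailSum k b ∧ colexLt a b)
  irrefl a h := by
    rcases h with h | h
    · exact lt_irrefl _ h
    · exact colexLt_irrefl _ h.2
  trans a b c h h' := by
    rcases h with h | ⟨h, h2⟩ <;> rcases h' with h' | ⟨h', h2'⟩
    · left; omega
    · left; omega
    · left; omega
    · right; exact ⟨h.trans h', colexLt_trans _ _ _ h2 h2'⟩
  total a b h := by
    have := colexLt_total a b h
    rcases lt_trichotomy (tailSum k a) (tailSum k b) with h1 | h1 | h1
    · exact Or.inl (Or.inl h1)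
    · exact this.imp (fun h => Or.inr ⟨h1, h⟩) (fun h => Or.inr ⟨h1.symm, h⟩)
    · exact Or.inr (Or.inl h1)
  one_lt t ht := by
    rw [map_zero]
    rcases Nat.eq_zero_or_pos (tailSum k t) with h | h
    · right
      refine ⟨h.symm, ?_⟩
      rcases colexLt_total 0 t ht.symm with h | ⟨j, hj, _⟩
      · exact h
      · simp at hj
    · exact Or.inl h
  mul_lt t s s' h := by
    rw [map_add, map_add]
    rcases h with h | ⟨h, j, hj, hj'⟩
    · left; omega
    · right
      refine ⟨by omega, j, ?_, ?_⟩
      · simpa using hj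
      · intro i hi
        simpa using hj' i hi
  std i j hij := by
    have hc : colexLt (Finsupp.single i 1) (Finsupp.single j 1) := by
      refine ⟨j, ?_, ?_⟩
      · simp [Finsupp.single_apply, hij.ne]
      · intro l hl
        simp [Finsupp.single_apply, hl.ne, (hij.trans hl).ne]
    rw [tailSum_single, tailSum_single]
    by_cases h1 : k ≤ i
    · have h2 : k ≤ j := h1.trans hij.le
      simp [h1, h2, hc]
    · by_cases h2 : k ≤ j <;> simp [h1, h2, hc]

theorem tailSum_le_of_Cle {a b : ℕ+ →₀ ℕ} (h : Cle a b) (k : ℕ+) :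
    tailSum k a ≤ tailSum k b := by
  rcases h (tailOrder k) with h | h | h
  · rw [h]
  · exact h.le
  · exact h.1.le

theorem eq_add_single {c : ℕ+ →₀ ℕ} {i : ℕ+} (h : 0 < c i) :
    ∃ d, c = d + Finsupp.single i 1 :=
  ⟨c - Finsupp.single i 1, by
    rw [tsub_add_cancel_of_le]
    rw [Finsupp.single_le_iff]
    exact h⟩

theorem CStep_lt (T : CStdTermOrder) {c c' : ℕ+ →₀ ℕ} (h : CStep c c') : T.lt c c' := by
  rcases h with ⟨i, rfl⟩ | ⟨i, hi, h⟩
  · have := T.mul_lt c 0 (Finsupp.single i 1) (T.one_lt _ (by simp))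
    rwa [add_zero] at this
  · obtain ⟨d, rfl⟩ := eq_add_single hi
    have hc : c' = d + Finsupp.single (i + 1) 1 := by
      rw [add_right_comm] at h
      exact add_right_cancel h
    subst hc
    exact T.mul_lt d _ _ (T.std i (i + 1) (PNat.lt_add_right i 1))

theorem steps_add {a b : ℕ+ →₀ ℕ} (t : ℕ+ →₀ ℕ) (h : Relation.ReflTransGen CStep a b) :
    Relation.ReflTransGen CStep (a + t) (b + t) := by
  refine Relation.ReflTransGen.lift (· + t) ?_ _ _ h
  rintro x y (⟨i, rfl⟩ | ⟨i, hi, h⟩)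
  · exact Or.inl ⟨i, by dsimp only; rw [add_right_comm]⟩
  · refine Or.inr ⟨i, ?_, ?_⟩
    · simp only [Finsupp.add_apply]; omega
    · dsimp only
      rw [add_right_comm, h, add_right_comm]

theorem steps_zero (b : ℕ+ →₀ ℕ) : Relation.ReflTransGen CStep 0 b := by
  induction hn : tailSum 1 b generalizing b with
  | zero =>
    by_cases hb : b = 0
    · rw [hb]
    · obtain ⟨i, hi⟩ := DFunLike.ne_iff.mp hb
      obtain ⟨d, rfl⟩ := eq_add_single (Nat.pos_of_ne_zero hi)
      simp [tailSum_single] at hn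
  | succ n ih =>
    have hb : b ≠ 0 := by rintro rfl; simp at hn
    obtain ⟨i, hi⟩ := DFunLike.ne_iff.mp hb
    obtain ⟨d, rfl⟩ := eq_add_single (Nat.pos_of_ne_zero hi)
    rw [map_add, tailSum_single, if_pos one_le] at hn
    exact (ih d (by omega)).tail (Or.inl ⟨i, rfl⟩)

theorem steps_single {n m : ℕ+} (h : n ≤ m) (d : ℕ+ →₀ ℕ) :
    Relation.ReflTransGen CStep (d + Finsupp.single n 1) (d + Finsupp.single m 1) := by
  induction m using PNat.recOn with
  | one => rw [le_antisymm h one_le]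
  | succ m ih =>
    rcases h.eq_or_lt with h | h
    · rw [h]
    · refine (ih (PNat.lt_add_one_iff.mp h)).tail (Or.inr ⟨m, by simp, ?_⟩)
      rw [add_right_comm]

theorem tailSum_eq_zero {k : ℕ+} {c : ℕ+ →₀ ℕ} (h : ∀ i, k ≤ i → c i = 0) :
    tailSum k c = 0 := by
  unfold tailSum
  rw [Finsupp.liftAddHom_apply]
  refine Finset.sum_eq_zero fun i _ => ?_
  dsimp only
  split_ifs with hk
  · simpa using h i hk
  · simp

theorem steps_of_tailSum (a b : ℕ+ →₀ ℕ) (h : ∀ k, tailSum k a ≤ tailSum k b) :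
    Relation.ReflTransGen CStep a b := by
  induction hN : tailSum 1 a generalizing a b with
  | zero =>
    by_cases ha : a = 0
    · rw [ha]; exact steps_zero b
    · obtain ⟨i, hi⟩ := DFunLike.ne_iff.mp ha
      obtain ⟨d, rfl⟩ := eq_add_single (Nat.pos_of_ne_zero hi)
      simp [tailSum_single] at hN
  | succ N ih =>
    have ha : a ≠ 0 := by rintro rfl; simp at hN
    obtain ⟨n, hn, hmax⟩ := Finset.exists_max_image a.support (fun i : ℕ+ => i)
      (Finsupp.support_nonempty_iff.mpr ha)
    have hz : ∀ i, n < i → a i = 0 := by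
      intro i hi
      by_contra hc
      exact absurd hi (not_lt.mpr (hmax i (Finsupp.mem_support_iff.mpr hc)))
    obtain ⟨a', rfl⟩ := eq_add_single (Nat.pos_of_ne_zero (Finsupp.mem_support_iff.mp hn))
    have hm : ∃ m, n ≤ m ∧ b m ≠ 0 := by
      by_contra! hc
      have h1 := h n
      rw [tailSum_eq_zero hc, map_add, tailSum_single, if_pos le_rfl] at h1
      omega
    obtain ⟨m, hnm, hbm⟩ := hm
    obtain ⟨b', rfl⟩ := eq_add_single (Nat.pos_of_ne_zero hbm)
    refine (steps_add _ (ih a' b' ?_ ?_)).trans (steps_single hnm b')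
    · intro k
      have h1 := h k
      by_cases hk : k ≤ n
      · simp only [map_add, tailSum_single, if_pos hk, if_pos (hk.trans hnm)] at h1
        omega
      · have h2 := tailSum_eq_zero (fun i hi => hz i ((not_le.mp hk).trans_le hi))
        rw [map_add] at h2
        omega
    · rw [map_add, tailSum_single, if_pos one_le] at hN
      omega

/-- `a ≤_𝔠 b` iff `b` is obtained from `a` by a finite sequence of the
elementary steps. -/
theorem stmt12 (a b : ℕ+ →₀ ℕ) :
    Cle a b ↔ Relation.ReflTransGen CStep a b := by
  constructor
  · intro h
    exact steps_of_tailSum a b (tailSum_le_of_Cle h)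
  · intro h T
    induction h with
    | refl => exact Or.inl rfl
    | tail _ hs ih =>
      rcases ih with rfl | ih
      · exact Or.inr (CStep_lt T hs)
      · exact Or.inr (T.trans _ _ _ ih (CStep_lt T hs))
end
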